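/- Let b = (b_1,…,b_n) and suppose a_i b_j ∉ q^{−ℕ} for all 1 ≤ i, j ≤ n, and 0 < |s| < 1. Then the truncated dual Milne–Gustafson sum evaluates as Ī(s;b) = (1−q)ⁿ (q)_∞ⁿ (s a_1⋯a_n b_1⋯b_n)_∞ / [ (s)_∞ · ∏_{i=1}^n ∏_{j=1}^n (a_i b_j)_∞ ] · ∏_{1≤i<j≤n} b_i θ(b_j/b_i). (Corollary 3.8 of the paper, written multiplicatively with s = q^β.) -/

import Mathlib

/-!
At `y = b` only `ν ∈ ℕⁿ` contributes, so the claim is the evaluation of a power series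
`F(s) = ∑_ν s^{|ν|} W(ν) Δ(w)`, where `w_i = b_i q^{ν_i}`, `W(ν)` is the product of the
q-Pochhammer quotients and `Δ` is the Vandermonde determinant. The proof derives the first-order
q-difference equation `(1 - s) F(s) = (1 - s ∏ a ∏ b) F(qs)` (`mgSeries_step`) and iterates it:
`F(q^K s)` tends to the term `ν = 0`, so `(s)_∞ F(s) = (s ∏ a ∏ b)_∞ W(0) Δ(b)`
(`mgSeries_eval`), and `W(0) Δ(b)` is rewritten with theta functions by `prod_theta`.

The equation rests on two facts. First, for any `β`, expanding along the first column the
Vandermonde matrix in which that column is replaced by the values of `∏_j (1 - β_j X)` gives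
`∑_i ∏_j (1 - β_j w_i) C_i(w) = (1 - ∏ β ∏ w) Δ(w)`, where the cofactor `C_i` does not depend on
`w_i` (`sum_prod_mul_vcof`); with `β = b⁻¹` and `β = a` the right-hand factors are `1 - q^{|ν|}` and
`1 - ∏ a ∏ b q^{|ν|}`. Second, the substitution `ν ↦ ν + e_i` exchanges `∏_j (1 - b_j⁻¹ w_i)` and
`∏_j (1 - a_j w_i)` (`mgProd_step`, `tsum_shift`). Neither fact divides by differences of the
`w_i`, so coinciding points, i.e. `b_i / b_j ∈ q^ℤ`, need no separate treatment.
-/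

open scoped BigOperators
open Finset

/-- The infinite q-Pochhammer symbol `(a)_∞ = ∏_{i=0}^∞ (1 - qⁱ a)`. -/
noncomputable def qp (q a : ℂ) : ℂ := ∏' i : ℕ, (1 - q ^ i * a)

/-- The theta function `θ(a) = (a)_∞ (q/a)_∞`. -/
noncomputable def th (q a : ℂ) : ℂ := qp q a * qp q (q / a)

/-- Summand of the normalized dual Jackson integral of Milne–Gustafson type. -/
noncomputable def mgDualTerm {n : ℕ} (q s : ℂ) (a b y : Fin n → ℂ) (ν : Fin n → ℤ) : ℂ :=
  s ^ (∑ i, ν i) *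
    (∏ i, ∏ j, qp q (q * (b j)⁻¹ * (y i * q ^ ν i)) / qp q (a j * (y i * q ^ ν i))) *
    ∏ i, ∏ j ∈ Finset.Ioi i, (y i * q ^ ν i - y j * q ^ ν j)

/-- The normalized dual Jackson integral of Milne–Gustafson type `Ī(s;y)`. -/
noncomputable def mgDualSum {n : ℕ} (q s : ℂ) (a b y : Fin n → ℂ) : ℂ :=
  (1 - q) ^ n * ∑' ν : Fin n → ℤ, mgDualTerm q s a b y ν

/-! ### The infinite q-Pochhammer symbol -/

lemma summable_qp_factor {q : ℂ} (hq : ‖q‖ < 1) (a : ℂ) :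
    Summable fun i : ℕ => ‖-(q ^ i * a)‖ := by
  simp only [norm_neg, norm_mul, norm_pow]
  exact (summable_geometric_of_lt_one (norm_nonneg q) hq).mul_right _

lemma multipliable_qp {q : ℂ} (hq : ‖q‖ < 1) (a : ℂ) :
    Multipliable fun i : ℕ => 1 - q ^ i * a := by
  simpa only [sub_eq_add_neg] using multipliable_one_add_of_summable (summable_qp_factor hq a)

lemma qp_eq_mul {q : ℂ} (hq : ‖q‖ < 1) (a : ℂ) : qp q a = (1 - a) * qp q (q * a) := by
  have h : ∀ i : ℕ, 1 - q ^ (i + 1) * a = 1 - q ^ i * (q * a) := fun i => by ring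
  have hm := multipliable_qp hq (q * a)
  unfold qp
  rw [tprod_eq_zero_mul' (f := fun i : ℕ => 1 - q ^ i * a) (by simpa only [h] using hm)]
  simp only [h, pow_zero, one_mul]

lemma qp_ne_zero {q : ℂ} (hq : ‖q‖ < 1) {a : ℂ} (h : ∀ i : ℕ, 1 - q ^ i * a ≠ 0) :
    qp q a ≠ 0 := by
  unfold qp
  simp only [sub_eq_add_neg] at h ⊢
  exact tprod_one_add_ne_zero_of_summable h (summable_qp_factor hq a)

lemma tendsto_qp_prod {q : ℂ} (hq : ‖q‖ < 1) (a : ℂ) :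
    Filter.Tendsto (fun K : ℕ => ∏ k ∈ range K, (1 - q ^ k * a)) Filter.atTop
      (nhds (qp q a)) :=
  (multipliable_qp hq a).hasProd.tendsto_prod_nat

lemma tendsto_qp_mul_pow {q : ℂ} (hq : ‖q‖ < 1) (a : ℂ) :
    Filter.Tendsto (fun k : ℕ => qp q (a * q ^ k)) Filter.atTop (nhds 1) := by
  have h := tendsto_tprod_one_add_of_dominated_convergence (𝓕 := Filter.atTop)
    (f := fun (k : ℕ) (i : ℕ) => -(q ^ i * (a * q ^ k))) (g := fun _ => (0 : ℂ))
    (summable_qp_factor hq a) (fun i => ?_) (Filter.Eventually.of_forall fun k i => ?_)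
  · simpa [qp, sub_eq_add_neg] using h
  · have := ((tendsto_pow_atTop_nhds_zero_of_norm_lt_one hq).const_mul (q ^ i * a)).neg
    simpa [mul_assoc] using this
  · simp only [norm_neg, norm_mul, norm_pow]
    have h1 : ‖q‖ ^ k ≤ 1 := pow_le_one₀ (norm_nonneg q) hq.le
    have h2 : ‖a‖ * ‖q‖ ^ k ≤ ‖a‖ := mul_le_of_le_one_right (norm_nonneg a) h1
    exact mul_le_mul_of_nonneg_left h2 (by positivity)

/-! ### A Vandermonde identity -/

/-- The cofactor of the `i`-th entry of the first column of the Vandermonde matrix of `w`. -/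
noncomputable def vcof {m : ℕ} (i : Fin (m + 1)) (w : Fin (m + 1) → ℂ) : ℂ :=
  (-1) ^ (i : ℕ) * Matrix.det (Matrix.of fun r c : Fin m => w (i.succAbove r) ^ ((c : ℕ) + 1))

lemma vcof_congr {m : ℕ} (i : Fin (m + 1)) {w w' : Fin (m + 1) → ℂ}
    (h : ∀ j, j ≠ i → w j = w' j) : vcof i w = vcof i w' := by
  simp only [vcof, h _ (Fin.succAbove_ne i _)]

lemma continuous_vcof {m : ℕ} (i : Fin (m + 1)) : Continuous (vcof i) := by
  unfold vcof
  refine continuous_const.mul (Continuous.matrix_det ?_)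
  refine continuous_matrix fun r c => ?_
  simp only [Matrix.of_apply]
  fun_prop

lemma sum_mul_vcof {m : ℕ} (w p : Fin (m + 1) → ℂ) :
    ∑ i, p i * vcof i w = ((Matrix.vandermonde w).updateCol 0 p).det := by
  rw [Matrix.det_succ_column_zero]
  refine Finset.sum_congr rfl fun i _ => ?_
  have : ((Matrix.vandermonde w).updateCol 0 p).submatrix i.succAbove Fin.succ
      = Matrix.of fun r c : Fin m => w (i.succAbove r) ^ ((c : ℕ) + 1) := by
    ext r c
    simp [Matrix.vandermonde_apply]
  rw [this, Matrix.updateCol_self, vcof]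
  ring

open Polynomial in
/-- Replace the first column of the Vandermonde matrix by the values `P(w_i)` of
`P = ∏_j (1 - β_j X)`. Modulo `∏_j (X - w_j)`, which vanishes at every `w_i`, the polynomial `P`
has degree at most `m` and constant term `1 - ∏ β ∏ w`; only that term contributes to the
determinant. The points `w_i` need not be distinct. -/
lemma sum_prod_mul_vcof {m : ℕ} (β w : Fin (m + 1) → ℂ) :
    ∑ i, (∏ j, (1 - β j * w i)) * vcof i w
      = (1 - (∏ j, β j) * ∏ j, w j) * (Matrix.vandermonde w).det := by
  set P : ℂ[X] := ∏ j, (1 - C (β j) * X) with hP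
  set Q : ℂ[X] := ∏ j, (X - C (w j)) with hQ
  set c : ℂ := ∏ j, (-β j) with hc
  have hd : ∀ j, (1 - C (β j) * X : ℂ[X]).natDegree ≤ 1 := fun j => by compute_degree
  have hPd : P.natDegree ≤ m + 1 := by
    refine (natDegree_prod_le _ _).trans ((Finset.sum_le_sum fun j _ => hd j).trans ?_)
    simp
  have hQd : Q.natDegree ≤ m + 1 := by
    rw [hQ, natDegree_prod_of_monic _ _ fun j _ => monic_X_sub_C _]
    simp
  have hPc : P.coeff (m + 1) = c := by
    have := coeff_prod_of_natDegree_le (s := Finset.univ)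
      (fun j => (1 - C (β j) * X : ℂ[X])) 1 fun j _ => hd j
    simp only [Finset.card_univ, Fintype.card_fin, mul_one] at this
    rw [hP, this, hc]
    refine Finset.prod_congr rfl fun j _ => ?_
    simp [coeff_one]
  have hQc : Q.coeff (m + 1) = 1 := by
    have := coeff_prod_of_natDegree_le (s := Finset.univ)
      (fun j => (X - C (w j) : ℂ[X])) 1 fun j _ => by compute_degree
    simp only [Finset.card_univ, Fintype.card_fin, mul_one] at this
    rw [hQ, this]
    simp
  set R : ℂ[X] := P - C c * Q with hR
  have hRd : R.natDegree < m + 1 := by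
    refine lt_of_le_of_ne ?_ ?_
    · exact (natDegree_sub_le _ _).trans
        (max_le hPd ((natDegree_C_mul_le _ _).trans hQd))
    · intro h
      have h0 : R.coeff (m + 1) = 0 := by simp [hR, hPc, hQc]
      rw [← h, coeff_natDegree, leadingCoeff_eq_zero] at h0
      simp [h0] at h
  have hRw : ∀ i, R.eval (w i) = ∏ j, (1 - β j * w i) := by
    intro i
    have : Q.eval (w i) = 0 := by
      rw [hQ, eval_prod]
      exact Finset.prod_eq_zero (Finset.mem_univ i) (by simp)
    simp [hR, this, hP, eval_prod]
  have hR0 : R.coeff 0 = 1 - (∏ j, β j) * ∏ j, w j := by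
    rw [coeff_zero_eq_eval_zero]
    simp only [hR, hP, hQ, hc, eval_sub, eval_mul, eval_C, eval_prod, eval_one, eval_X,
      mul_zero, sub_zero, Finset.prod_const_one, zero_sub]
    rw [← Finset.prod_mul_distrib, ← Finset.prod_mul_distrib]
    simp
  rw [sum_mul_vcof, ← hR0]
  have hcol : (fun i => ∏ j, (1 - β j * w i))
      = fun i => ∑ k : Fin (m + 1), R.coeff k • Matrix.vandermonde w i k := by
    funext i
    rw [← hRw, eval_eq_sum_range' hRd, ← Fin.sum_univ_eq_sum_range
      (fun k => R.coeff k * w i ^ k)]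
    simp [Matrix.vandermonde_apply]
  rw [hcol, Matrix.det_updateCol_sum _ 0 fun k : Fin (m + 1) => R.coeff k]
  simp

/-! ### Summation over `ℕⁿ` -/

lemma summable_pow_sum {r : ℝ} (h0 : 0 ≤ r) (h1 : r < 1) (n : ℕ) :
    Summable fun ν : Fin n → ℕ => r ^ ∑ i, ν i := by
  induction n with
  | zero => exact Summable.of_finite
  | succ n ih =>
    rw [← (Fin.consEquiv fun _ : Fin (n + 1) => ℕ).summable_iff]
    have := (summable_geometric_of_lt_one h0 h1).mul_of_nonneg ih
      (fun _ => pow_nonneg h0 _) (fun _ => pow_nonneg h0 _)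
    refine this.congr fun p => ?_
    simp [Fin.sum_univ_succ, pow_add]

lemma summable_pow_mul {n : ℕ} {s : ℂ} (hs : ‖s‖ < 1) {g : (Fin n → ℕ) → ℂ}
    (hg : ∃ B, ∀ ν, ‖g ν‖ ≤ B) : Summable fun ν : Fin n → ℕ => s ^ (∑ i, ν i) * g ν := by
  obtain ⟨B, hB⟩ := hg
  refine ((summable_pow_sum (norm_nonneg s) hs n).mul_right B).of_norm_bounded fun ν => ?_
  rw [norm_mul, norm_pow]
  exact mul_le_mul_of_nonneg_left (hB ν) (by positivity)

lemma bounded_mul {α : Type*} {f g : α → ℂ} (hf : ∃ B, ∀ x, ‖f x‖ ≤ B)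
    (hg : ∃ B, ∀ x, ‖g x‖ ≤ B) : ∃ B, ∀ x, ‖f x * g x‖ ≤ B := by
  obtain ⟨B, hB⟩ := hf
  obtain ⟨B', hB'⟩ := hg
  refine ⟨B * B', fun x => ?_⟩
  rw [norm_mul]
  exact mul_le_mul (hB x) (hB' x) (norm_nonneg _) ((norm_nonneg _).trans (hB x))

/-- Abel-type limit: only the term `ν = 0` survives as the variable tends to `0` along `q^K s`. -/
lemma tendsto_tsum_pow_mul {n : ℕ} {q s : ℂ} (hq : ‖q‖ < 1) (hs : ‖s‖ < 1)
    {g : (Fin n → ℕ) → ℂ} (hg : ∃ B, ∀ ν, ‖g ν‖ ≤ B) :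
    Filter.Tendsto (fun K : ℕ => ∑' ν : Fin n → ℕ, (q ^ K * s) ^ (∑ i, ν i) * g ν)
      Filter.atTop (nhds (g 0)) := by
  obtain ⟨B, hB⟩ := hg
  have h0 : ∑' ν : Fin n → ℕ, (if ν = 0 then g 0 else 0) = g 0 := tsum_ite_eq 0 _
  rw [← h0]
  refine tendsto_tsum_of_dominated_convergence
    ((summable_pow_sum (norm_nonneg s) hs n).mul_right B) (fun ν => ?_)
    (Filter.Eventually.of_forall fun K ν => ?_)
  · split_ifs with h
    · subst h
      simp
    · have hν : ∑ i, ν i ≠ 0 := by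
        intro h'
        apply h
        funext i
        exact (Finset.sum_eq_zero_iff.mp h') i (Finset.mem_univ i)
      have h1 : Filter.Tendsto (fun K : ℕ => q ^ K * s) Filter.atTop (nhds 0) := by
        simpa using (tendsto_pow_atTop_nhds_zero_of_norm_lt_one hq).mul_const s
      simpa [hν] using (h1.pow (∑ i, ν i)).mul_const (g ν)
  · rw [norm_mul, norm_pow, norm_mul, norm_pow]
    have h1 : ‖q‖ ^ K ≤ 1 := pow_le_one₀ (norm_nonneg q) hq.le
    have h2 : ‖q‖ ^ K * ‖s‖ ≤ ‖s‖ := mul_le_of_le_one_left (norm_nonneg s) h1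
    exact mul_le_mul (pow_le_pow_left₀ (by positivity) h2 _) (hB ν) (norm_nonneg _)
      (by positivity)

/-! ### The summand at `y = b` -/

/-- The one-variable weight `∏_j (q b_j⁻¹ x)_∞ / (a_j x)_∞`. -/
noncomputable def mgWeight {n : ℕ} (q : ℂ) (a b : Fin n → ℂ) (x : ℂ) : ℂ :=
  ∏ j, qp q (q * (b j)⁻¹ * x) / qp q (a j * x)

/-- The lattice point `(b_1 q^{ν_1}, …, b_n q^{ν_n})`. -/
def mgPoint {n : ℕ} (q : ℂ) (b : Fin n → ℂ) (ν : Fin n → ℕ) (i : Fin n) : ℂ := b i * q ^ ν i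

/-- The product of the one-variable weights over the coordinates of a lattice point. -/
noncomputable def mgProd {n : ℕ} (q : ℂ) (a b : Fin n → ℂ) (ν : Fin n → ℕ) : ℂ :=
  ∏ i, mgWeight q a b (mgPoint q b ν i)

lemma mgWeight_step {n : ℕ} {q : ℂ} (hq : ‖q‖ < 1) {a b : Fin n → ℂ} {x : ℂ}
    (hx : ∀ j, qp q (a j * x) ≠ 0) :
    mgWeight q a b (q * x) * ∏ j, (1 - (b j)⁻¹ * (q * x))
      = mgWeight q a b x * ∏ j, (1 - a j * x) := by
  unfold mgWeight
  rw [← Finset.prod_mul_distrib, ← Finset.prod_mul_distrib]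
  refine Finset.prod_congr rfl fun j _ => ?_
  have h1 := qp_eq_mul hq (q * (b j)⁻¹ * x)
  have h2 := qp_eq_mul hq (a j * x)
  have h3 := hx j
  rw [show q * (b j)⁻¹ * (q * x) = q * (q * (b j)⁻¹ * x) by ring,
    show a j * (q * x) = q * (a j * x) by ring,
    show (b j)⁻¹ * (q * x) = q * (b j)⁻¹ * x by ring]
  rw [h2] at h3
  have h4 := left_ne_zero_of_mul h3
  have h5 := right_ne_zero_of_mul h3
  rw [h1, h2]
  generalize 1 - a j * x = e at h4
  generalize qp q (q * (a j * x)) = v at h5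
  generalize qp q (q * (q * (b j)⁻¹ * x)) = u
  field_simp

lemma mgPoint_add_single {n : ℕ} (q : ℂ) (b : Fin n → ℂ) (μ : Fin n → ℕ) (i : Fin n) :
    mgPoint q b (μ + Pi.single i 1) i = q * mgPoint q b μ i := by
  simp only [mgPoint, Pi.add_apply, Pi.single_eq_same, pow_succ]
  ring

lemma mgPoint_add_single_ne {n : ℕ} (q : ℂ) (b : Fin n → ℂ) (μ : Fin n → ℕ) {i j : Fin n}
    (h : j ≠ i) : mgPoint q b (μ + Pi.single i 1) j = mgPoint q b μ j := by
  simp [mgPoint, h]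

/-- Raising `ν_i` by one trades the factor `∏_j (1 - b_j⁻¹ x)` at the new coordinate for the
factor `∏_j (1 - a_j x)` at the old one. -/
lemma mgProd_step {n : ℕ} {q : ℂ} (hq : ‖q‖ < 1) {a b : Fin n → ℂ}
    (hden : ∀ i j (k : ℕ), qp q (a j * (b i * q ^ k)) ≠ 0) (μ : Fin n → ℕ) (i : Fin n) :
    mgProd q a b (μ + Pi.single i 1)
        * ∏ j, (1 - (b j)⁻¹ * mgPoint q b (μ + Pi.single i 1) i)
      = mgProd q a b μ * ∏ j, (1 - a j * mgPoint q b μ i) := by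
  have h := mgWeight_step hq (b := b) (x := mgPoint q b μ i) fun j => hden i j (μ i)
  unfold mgProd
  rw [← Finset.mul_prod_erase _ _ (Finset.mem_univ i),
    ← Finset.mul_prod_erase Finset.univ (fun i => mgWeight q a b (mgPoint q b μ i))
      (Finset.mem_univ i), mgPoint_add_single]
  have h' : ∏ x ∈ Finset.univ.erase i, mgWeight q a b (mgPoint q b (μ + Pi.single i 1) x)
      = ∏ x ∈ Finset.univ.erase i, mgWeight q a b (mgPoint q b μ x) :=
    Finset.prod_congr rfl fun x hx => by
      rw [mgPoint_add_single_ne q b μ (Finset.ne_of_mem_erase hx)]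
  rw [h']
  linear_combination (∏ x ∈ Finset.univ.erase i, mgWeight q a b (mgPoint q b μ x)) * h

lemma bounded_mgProd {n : ℕ} {q : ℂ} (hq : ‖q‖ < 1) (a b : Fin n → ℂ) :
    ∃ B, ∀ ν, ‖mgProd q a b ν‖ ≤ B := by
  have h : ∀ i, ∃ B, ∀ k : ℕ, ‖mgWeight q a b (b i * q ^ k)‖ ≤ B := by
    intro i
    have ht : Filter.Tendsto (fun k : ℕ => mgWeight q a b (b i * q ^ k)) Filter.atTop
        (nhds (∏ _j : Fin n, (1 / 1 : ℂ))) := by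
      unfold mgWeight
      refine tendsto_finsetProd _ fun j _ => ?_
      simp only [← mul_assoc]
      exact (tendsto_qp_mul_pow hq _).div (tendsto_qp_mul_pow hq _) one_ne_zero
    obtain ⟨B, hB⟩ := (Metric.isBounded_range_of_tendsto _ ht).exists_norm_le
    exact ⟨B, fun k => hB _ ⟨k, rfl⟩⟩
  choose B hB using h
  refine ⟨∏ i, B i, fun ν => ?_⟩
  unfold mgProd
  rw [norm_prod]
  exact Finset.prod_le_prod (fun _ _ => norm_nonneg _) fun i _ => hB i (ν i)

lemma bounded_mgPoint {n : ℕ} {q : ℂ} (hq : ‖q‖ < 1) (b : Fin n → ℂ)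
    {g : (Fin n → ℂ) → ℂ} (hg : Continuous g) : ∃ B, ∀ ν, ‖g (mgPoint q b ν)‖ ≤ B := by
  obtain ⟨B, hB⟩ := (isCompact_closedBall (0 : Fin n → ℂ) ‖b‖).exists_bound_of_continuousOn
    hg.continuousOn
  refine ⟨B, fun ν => hB _ ?_⟩
  rw [mem_closedBall_zero_iff, pi_norm_le_iff_of_nonneg (norm_nonneg b)]
  intro i
  rw [mgPoint, norm_mul, norm_pow]
  exact (mul_le_of_le_one_right (norm_nonneg _) (pow_le_one₀ (norm_nonneg q) hq.le)).trans
    (norm_le_pi_norm b i)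

lemma prod_mgPoint {n : ℕ} (q : ℂ) (b : Fin n → ℂ) (ν : Fin n → ℕ) :
    ∏ i, mgPoint q b ν i = (∏ i, b i) * q ^ ∑ i, ν i := by
  simp only [mgPoint, Finset.prod_mul_distrib, Finset.prod_pow_eq_pow_sum]

/-! ### The q-difference equation -/

/-- The series `F(s) = ∑_{ν ∈ ℕⁿ} s^{|ν|} W(ν) Δ(ν)`, where `W = mgProd` and `Δ(ν)` is the
Vandermonde determinant of the lattice point of `ν`. -/
noncomputable def mgSeries {n : ℕ} (q : ℂ) (a b : Fin n → ℂ) (s : ℂ) : ℂ :=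
  ∑' ν : Fin n → ℕ, s ^ (∑ i, ν i) *
    (mgProd q a b ν * (Matrix.vandermonde (mgPoint q b ν)).det)

lemma continuous_det_vandermonde {n : ℕ} :
    Continuous fun w : Fin n → ℂ => (Matrix.vandermonde w).det := by
  refine Continuous.matrix_det (continuous_matrix fun i j => ?_)
  simp only [Matrix.vandermonde_apply]
  fun_prop

/-- The substitution `ν = μ + e_i`; the terms with `ν_i = 0` vanish because of the factor
`1 - b_i⁻¹ b_i`. -/
lemma tsum_shift {m : ℕ} {q : ℂ} (hq : ‖q‖ < 1) {a b : Fin (m + 1) → ℂ}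
    (hb : ∀ i, b i ≠ 0) (hden : ∀ i j (k : ℕ), qp q (a j * (b i * q ^ k)) ≠ 0)
    (s : ℂ) (i : Fin (m + 1)) :
    ∑' ν : Fin (m + 1) → ℕ, s ^ (∑ j, ν j) * (mgProd q a b ν *
        ((∏ j, (1 - (b j)⁻¹ * mgPoint q b ν i)) * vcof i (mgPoint q b ν)))
      = s * ∑' μ : Fin (m + 1) → ℕ, s ^ (∑ j, μ j) * (mgProd q a b μ *
        ((∏ j, (1 - a j * mgPoint q b μ i)) * vcof i (mgPoint q b μ))) := by
  have hinj : Function.Injective fun μ : Fin (m + 1) → ℕ => μ + Pi.single i 1 :=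
    add_left_injective _
  rw [← hinj.tsum_eq, ← tsum_mul_left]
  · refine tsum_congr fun μ => ?_
    have h1 := mgProd_step hq hden μ i
    have h2 : vcof i (mgPoint q b (μ + Pi.single i 1)) = vcof i (mgPoint q b μ) :=
      vcof_congr i fun j hj => mgPoint_add_single_ne q b μ hj
    have h3 : ∑ j, (μ + Pi.single i 1 : Fin (m + 1) → ℕ) j = (∑ j, μ j) + 1 := by
      simp [Finset.sum_add_distrib]
    rw [h2, h3, pow_succ]
    linear_combination s ^ (∑ j, μ j) * s * vcof i (mgPoint q b μ) * h1
  · intro ν hν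
    by_cases h0 : ν i = 0
    · exfalso
      apply hν
      have : ∏ j, (1 - (b j)⁻¹ * mgPoint q b ν i) = 0 :=
        Finset.prod_eq_zero (Finset.mem_univ i) (by simp [mgPoint, h0, hb i])
      simp [this]
    · refine ⟨ν - Pi.single i 1, ?_⟩
      funext j
      by_cases hj : j = i
      · subst hj
        simp
        omega
      · simp [hj]

/-- The equation `(1 - s) F(s) = (1 - s ∏ a ∏ b) F(qs)`: the Vandermonde identity with `β = b⁻¹`
rewrites `F(s) - F(qs)`, the shifts `ν = μ + e_i` turn `b⁻¹` into `a`, and the identity with `β = a`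
gives `s (F(s) - ∏ a ∏ b F(qs))`. -/
lemma mgSeries_step {m : ℕ} {q : ℂ} (hq : ‖q‖ < 1) {a b : Fin (m + 1) → ℂ}
    (hb : ∀ i, b i ≠ 0) (hden : ∀ i j (k : ℕ), qp q (a j * (b i * q ^ k)) ≠ 0)
    {s : ℂ} (hs : ‖s‖ < 1) :
    (1 - s) * mgSeries q a b s
      = (1 - s * (∏ i, a i) * ∏ i, b i) * mgSeries q a b (q * s) := by
  have hW := bounded_mgProd hq a b
  have hD := bounded_mul hW (bounded_mgPoint hq b continuous_det_vandermonde)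
  have hqs : ‖q * s‖ < 1 := by
    rw [norm_mul]
    exact mul_lt_one_of_nonneg_of_lt_one_left (norm_nonneg q) hq hs.le
  -- For either family `β`, summing the cofactor expansion over `ν` gives `F(s) - c F(qs)`.
  have key : ∀ β : Fin (m + 1) → ℂ,
      ∑ i, ∑' ν : Fin (m + 1) → ℕ, s ^ (∑ j, ν j) * (mgProd q a b ν *
        ((∏ j, (1 - β j * mgPoint q b ν i)) * vcof i (mgPoint q b ν)))
      = mgSeries q a b s - (∏ j, β j) * (∏ j, b j) * mgSeries q a b (q * s) := by
    intro β
    rw [← Summable.tsum_finsetSum]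
    · unfold mgSeries
      rw [← tsum_mul_left, ← (summable_pow_mul hs hD).tsum_sub
        ((summable_pow_mul hqs hD).mul_left _)]
      refine tsum_congr fun ν => ?_
      have h := sum_prod_mul_vcof β (mgPoint q b ν)
      rw [prod_mgPoint] at h
      rw [← Finset.mul_sum, ← Finset.mul_sum, h, mul_pow]
      ring
    · intro i _
      refine summable_pow_mul hs (bounded_mul hW (bounded_mgPoint hq b
        (g := fun w => (∏ j, (1 - β j * w i)) * vcof i w) ?_))
      exact Continuous.mul (by fun_prop) (continuous_vcof i)
  have h1 := key fun j => (b j)⁻¹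
  have h2 := key a
  simp only [tsum_shift hq hb hden, ← Finset.mul_sum, h2] at h1
  have h3 : (∏ j, (b j)⁻¹) * ∏ j, b j = 1 := by
    rw [← Finset.prod_mul_distrib]
    exact Finset.prod_eq_one fun j _ => inv_mul_cancel₀ (hb j)
  rw [h3] at h1
  linear_combination -h1

lemma mgSeries_eval {m : ℕ} {q : ℂ} (hq : ‖q‖ < 1) {a b : Fin (m + 1) → ℂ}
    (hb : ∀ i, b i ≠ 0) (hden : ∀ i j (k : ℕ), qp q (a j * (b i * q ^ k)) ≠ 0)
    {s : ℂ} (hs : ‖s‖ < 1) :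
    qp q s * mgSeries q a b s = qp q (s * (∏ i, a i) * ∏ i, b i) *
      ((∏ i, mgWeight q a b (b i)) * (Matrix.vandermonde b).det) := by
  have hK : ∀ K : ℕ, (∏ k ∈ range K, (1 - q ^ k * s)) * mgSeries q a b s
      = (∏ k ∈ range K, (1 - q ^ k * (s * (∏ i, a i) * ∏ i, b i))) *
        mgSeries q a b (q ^ K * s) := by
    intro K
    induction K with
    | zero => simp
    | succ K ih =>
      have hKs : ‖q ^ K * s‖ < 1 := by
        rw [norm_mul, norm_pow]
        exact (mul_le_of_le_one_left (norm_nonneg s)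
          (pow_le_one₀ (norm_nonneg q) hq.le)).trans_lt hs
      have h := mgSeries_step hq hb hden hKs
      rw [Finset.prod_range_succ, Finset.prod_range_succ, pow_succ',
        mul_assoc q]
      linear_combination (1 - q ^ K * s) * ih
        + (∏ k ∈ range K, (1 - q ^ k * (s * (∏ i, a i) * ∏ i, b i))) * h
  have hD := bounded_mul (bounded_mgProd hq a b)
    (bounded_mgPoint hq b continuous_det_vandermonde)
  have h1 := (tendsto_qp_prod hq s).mul_const (mgSeries q a b s)
  have h2 := (tendsto_qp_prod hq (s * (∏ i, a i) * ∏ i, b i)).mul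
    (tendsto_tsum_pow_mul hq hs hD)
  have h0 : mgPoint q b 0 = b := by
    funext i
    simp [mgPoint]
  simp only [mgProd, h0] at h2
  simp only [hK] at h1
  exact tendsto_nhds_unique h1 h2

/-! ### Back to the Jackson integral -/

lemma qp_zero_of_neg {q : ℂ} (hq0 : q ≠ 0) {k : ℤ} (hk : k < 0) :
    qp q (q * q ^ k) = 0 := by
  obtain ⟨l, hl⟩ : ∃ l : ℕ, k = -(l + 1 : ℤ) := ⟨(-k - 1).toNat, by omega⟩
  refine tprod_of_exists_eq_zero ⟨l, ?_⟩
  have : q ^ l * (q * q ^ k) = 1 := by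
    rw [hl, zpow_neg, ← mul_assoc, ← pow_succ]
    exact mul_inv_cancel₀ (by exact_mod_cast pow_ne_zero (l + 1) hq0)
  rw [this, sub_self]

/-- Terms with some `ν_i < 0` vanish through the factor `(q^{1+ν_i})_∞ = 0`, even where a denominator
is zero, since division by zero yields zero. The sign product accounts for the orientation of the
differences in the Vandermonde determinant. -/
lemma tsum_mgDualTerm {n : ℕ} {q : ℂ} (hq0 : q ≠ 0) (s : ℂ)
    {a b : Fin n → ℂ} (hb : ∀ i, b i ≠ 0) :
    ∑' ν : Fin n → ℤ, mgDualTerm q s a b b ν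
      = (∏ i : Fin n, ∏ _j ∈ Finset.Ioi i, (-1 : ℂ)) * mgSeries q a b s := by
  have hinj : Function.Injective fun (ν : Fin n → ℕ) (i : Fin n) => (ν i : ℤ) := by
    intro ν μ h
    funext i
    exact Nat.cast_injective (R := ℤ) (congrFun h i)
  rw [← hinj.tsum_eq, mgSeries, ← tsum_mul_left]
  · refine tsum_congr fun ν => ?_
    have h1 : ∏ i, ∏ j ∈ Finset.Ioi i, (b i * q ^ ν i - b j * q ^ ν j)
        = (∏ i : Fin n, ∏ _j ∈ Finset.Ioi i, (-1 : ℂ)) *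
          (Matrix.vandermonde (mgPoint q b ν)).det := by
      rw [Matrix.det_vandermonde, ← Finset.prod_mul_distrib]
      refine Finset.prod_congr rfl fun i _ => ?_
      rw [← Finset.prod_mul_distrib]
      refine Finset.prod_congr rfl fun j _ => ?_
      simp only [mgPoint]
      ring
    simp only [mgDualTerm, zpow_natCast, ← Nat.cast_sum]
    rw [h1]
    simp only [mgProd, mgWeight, mgPoint]
    ring
  · intro ν hν
    by_cases h : ∀ i, 0 ≤ ν i
    · exact ⟨fun i => (ν i).toNat, by funext i; simp [h i]⟩
    · exfalso
      push Not at h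
      obtain ⟨i, hi⟩ := h
      apply hν
      have h0 : q * (b i)⁻¹ * (b i * q ^ ν i) = q * q ^ ν i := by
        have := hb i
        field_simp
      have hz : ∏ i, ∏ j, qp q (q * (b j)⁻¹ * (b i * q ^ ν i)) / qp q (a j * (b i * q ^ ν i))
          = 0 := by
        refine Finset.prod_eq_zero (Finset.mem_univ i)
          (Finset.prod_eq_zero (Finset.mem_univ i) ?_)
        rw [h0, qp_zero_of_neg hq0 hi, zero_div]
      rw [mgDualTerm, hz, mul_zero, zero_mul]

lemma prod_prod_eq_diag_mul {n : ℕ} (f : Fin n → Fin n → ℂ) :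
    ∏ i, ∏ j, f i j = (∏ i, f i i) * ∏ i, ∏ j ∈ Finset.Ioi i, f i j * f j i := by
  have h1 : ∀ i, ∏ j, f i j = (f i i * ∏ j ∈ Finset.Ioi i, f i j) * ∏ j ∈ Finset.Iio i, f i j := by
    intro i
    have hu : (Finset.univ : Finset (Fin n)).erase i = Finset.Ioi i ∪ Finset.Iio i := by
      ext j
      simp only [Finset.mem_erase, Finset.mem_univ, and_true, Finset.mem_union,
        Finset.mem_Ioi, Finset.mem_Iio]
      exact ⟨fun h => (lt_or_gt_of_ne h).symm, fun h => h.elim ne_of_gt ne_of_lt⟩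
    have hdis : Disjoint (Finset.Ioi i) (Finset.Iio i) := by
      rw [Finset.disjoint_left]
      intro j h h'
      exact lt_asymm (Finset.mem_Ioi.mp h) (Finset.mem_Iio.mp h')
    rw [← Finset.mul_prod_erase _ _ (Finset.mem_univ i), hu, Finset.prod_union hdis, mul_assoc]
  have h2 : ∏ i, ∏ j ∈ Finset.Iio i, f i j = ∏ i, ∏ j ∈ Finset.Ioi i, f j i := by
    refine Finset.prod_comm' fun i j => ?_
    simp
  simp only [h1, Finset.prod_mul_distrib, h2]
  ring

/-- The numerator of the summand at `ν = 0` in terms of theta functions; the sign product turns the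
Vandermonde determinant into `∏_{i<j} (b_i - b_j)`. -/
lemma prod_theta {n : ℕ} {q : ℂ} (hq : ‖q‖ < 1) {b : Fin n → ℂ} (hb : ∀ i, b i ≠ 0) :
    (∏ i, ∏ j, qp q (q * (b j)⁻¹ * b i)) *
        ((∏ i : Fin n, ∏ _j ∈ Finset.Ioi i, (-1 : ℂ)) * (Matrix.vandermonde b).det)
      = qp q q ^ n * ∏ i, ∏ j ∈ Finset.Ioi i, b i * th q (b j / b i) := by
  have hdiag : ∏ i, qp q (q * (b i)⁻¹ * b i) = qp q q ^ n := by
    simp [hb]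
  rw [prod_prod_eq_diag_mul, hdiag, Matrix.det_vandermonde, mul_assoc]
  congr 1
  rw [← Finset.prod_mul_distrib, ← Finset.prod_mul_distrib]
  refine Finset.prod_congr rfl fun i _ => ?_
  rw [← Finset.prod_mul_distrib, ← Finset.prod_mul_distrib]
  refine Finset.prod_congr rfl fun j _ => ?_
  have hi := hb i
  have hj := hb j
  rw [th, qp_eq_mul hq (b j / b i),
    show q / (b j / b i) = q * (b j)⁻¹ * b i by field_simp,
    show q * (b j / b i) = q * (b i)⁻¹ * b j by field_simp]
  field_simp
  ring

/-- Evaluation of the truncated dual Milne–Gustafson sum `Ī(s;b)`. -/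
theorem milne_gustafson_dual_truncated_evaluation
    (q : ℝ) (hq0 : 0 < q) (hq1 : q < 1) (n : ℕ) (hn : 1 ≤ n)
    (a b : Fin n → ℂ) (ha : ∀ i, a i ≠ 0) (hb : ∀ i, b i ≠ 0)
    (s : ℂ) (hs0 : s ≠ 0) (hupp : ‖s‖ < 1)
    (hab : ∀ i j, ∀ m : ℕ, a i * b j ≠ ((q : ℂ) ^ m)⁻¹) :
    mgDualSum (q : ℂ) s a b b =
      (1 - (q : ℂ)) ^ n * qp (q : ℂ) (q : ℂ) ^ n *
          qp (q : ℂ) (s * (∏ i, a i) * ∏ i, b i) /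
          (qp (q : ℂ) s * ∏ i, ∏ j, qp (q : ℂ) (a i * b j)) *
        ∏ i, ∏ j ∈ Finset.Ioi i, b i * th (q : ℂ) (b j / b i) := by
  have hq : ‖(q : ℂ)‖ < 1 := by
    rw [Complex.norm_real, Real.norm_eq_abs, abs_of_pos hq0]
    exact hq1
  have hqne : (q : ℂ) ≠ 0 := by exact_mod_cast hq0.ne'
  obtain ⟨m, rfl⟩ : ∃ m, n = m + 1 := ⟨n - 1, by omega⟩
  have hden : ∀ i j (k : ℕ), qp (q : ℂ) (a j * (b i * (q : ℂ) ^ k)) ≠ 0 := by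
    intro i j k
    refine qp_ne_zero hq fun l h => hab j i (l + k) ?_
    refine eq_inv_of_mul_eq_one_left ?_
    rw [pow_add]
    linear_combination -h
  have hs : qp (q : ℂ) s ≠ 0 := by
    refine qp_ne_zero hq fun l h => ?_
    have h1 : (q : ℂ) ^ l * s = 1 := by linear_combination -h
    have h2 : ‖(q : ℂ) ^ l * s‖ < 1 := by
      rw [norm_mul, norm_pow]
      exact (mul_le_of_le_one_left (norm_nonneg s)
        (pow_le_one₀ (norm_nonneg _) hq.le)).trans_lt hupp
    rw [h1, norm_one] at h2
    exact lt_irrefl _ h2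
  have hprod : ∏ i, ∏ j, qp (q : ℂ) (a i * b j) ≠ 0 :=
    Finset.prod_ne_zero_iff.mpr fun i _ => Finset.prod_ne_zero_iff.mpr fun j _ => by
      simpa using hden j i 0
  have hmain := mgSeries_eval hq hb hden hupp
  have hth := prod_theta hq hb
  have hW : ∏ i, mgWeight (q : ℂ) a b (b i)
      = (∏ i, ∏ j, qp (q : ℂ) (q * (b j)⁻¹ * b i)) / ∏ i, ∏ j, qp (q : ℂ) (a i * b j) := by
    rw [Finset.prod_comm (f := fun i j => qp (q : ℂ) (a i * b j))]
    simp only [mgWeight, Finset.prod_div_distrib]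
  rw [hW] at hmain
  rw [mgDualSum, tsum_mgDualTerm hqne s hb]
  rw [mul_comm, ← eq_div_iff hs] at hmain
  rw [hmain]
  generalize ∏ i, ∏ j, qp (q : ℂ) (a i * b j) = V at hprod
  generalize ∏ i, ∏ j, qp (q : ℂ) (q * (b j)⁻¹ * b i) = U at hth
  generalize (1 - (q : ℂ)) ^ (m + 1) = c
  generalize qp (q : ℂ) (q : ℂ) ^ (m + 1) = d at hth
  field_simp
  linear_combination c * qp (q : ℂ) (s * (∏ i, a i) * ∏ i, b i) * hth
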